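/- Let A, B, C, D be m×m positive definite complex matrices with C ≤ A and D ≤ B in the Loewner order. Then C # D ≤ A # B. -/

import Mathlib

/-!
The geometric mean `a # b` is a nonnegative solution of the Riccati equation `x * a⁻¹ * x = b`, and
it is the greatest self-adjoint `x` with `x * a⁻¹ * x ≤ b`. Indeed, conjugating by `a^{-1/2}` turns
this constraint into `y * y ≤ a^{-1/2} * b * a^{-1/2}` with `y = a^{-1/2} * x * a^{-1/2}`, whence
`y ≤ |y| ≤ (a^{-1/2} * b * a^{-1/2})^{1/2}` because the square root is operator monotone. Since
inversion is operator antitone, increasing `a` and `b` relaxes the constraint, so the greatest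
element increases.
-/

open Matrix
open scoped ComplexOrder

noncomputable def matFun {m : ℕ} (f : ℝ → ℝ) (A : Matrix (Fin m) (Fin m) ℂ) :
    Matrix (Fin m) (Fin m) ℂ :=
  if hA : A.IsHermitian then
    (hA.eigenvectorUnitary : Matrix (Fin m) (Fin m) ℂ) *
      Matrix.diagonal (fun i => (f (hA.eigenvalues i) : ℂ)) *
      (star (hA.eigenvectorUnitary : Matrix (Fin m) (Fin m) ℂ))
  else 0

/-- The unique positive definite square root of a positive definite matrix
(realized via the spectral decomposition). -/
noncomputable def msqrt {m : ℕ} (A : Matrix (Fin m) (Fin m) ℂ) : Matrix (Fin m) (Fin m) ℂ :=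
  matFun Real.sqrt A

/-- The logarithm of a positive definite matrix: the unique Hermitian `L` with `exp L = A`. -/
noncomputable def mlog {m : ℕ} (A : Matrix (Fin m) (Fin m) ℂ) : Matrix (Fin m) (Fin m) ℂ :=
  matFun Real.log A

/-- The real power `A ^ t` of a positive definite matrix, via the spectral decomposition. -/
noncomputable def mpow {m : ℕ} (A : Matrix (Fin m) (Fin m) ℂ) (t : ℝ) : Matrix (Fin m) (Fin m) ℂ :=
  matFun (fun x => x ^ t) A

/-- The matrix geometric mean `A # B`. -/
noncomputable def gmean {m : ℕ} (A B : Matrix (Fin m) (Fin m) ℂ) : Matrix (Fin m) (Fin m) ℂ :=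
  msqrt A * msqrt ((msqrt A)⁻¹ * B * (msqrt A)⁻¹) * msqrt A

/-- The weighted geometric mean `A #_t B`. -/
noncomputable def wgmean {m : ℕ} (A B : Matrix (Fin m) (Fin m) ℂ) (t : ℝ) :
    Matrix (Fin m) (Fin m) ℂ :=
  msqrt A * mpow ((msqrt A)⁻¹ * B * (msqrt A)⁻¹) t * msqrt A

/-- The Frobenius (Hilbert–Schmidt) norm `‖X‖₂ = (Tr(X*X))^{1/2}`. -/
noncomputable def fnorm {m : ℕ} (X : Matrix (Fin m) (Fin m) ℂ) : ℝ :=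
  Real.sqrt ((Xᴴ * X).trace.re)

/-- The Riemannian metric `δ(A,B) = ‖log(A^{-1/2} B A^{-1/2})‖₂`. -/
noncomputable def rdist {m : ℕ} (A B : Matrix (Fin m) (Fin m) ℂ) : ℝ :=
  fnorm (mlog ((msqrt A)⁻¹ * B * (msqrt A)⁻¹))

/-- The Loewner order: `A ≤ B` iff `B - A` is positive semidefinite. -/
def Loewner {m : ℕ} (A B : Matrix (Fin m) (Fin m) ℂ) : Prop :=
  (B - A).PosSemidef

open CFC
open scoped Ring

section ConjSqrt

variable {R : Type*} [PartialOrder R] [Ring R] [StarRing R] [TopologicalSpace R]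
  [StarOrderedRing R] [Algebra ℝ R] [ContinuousFunctionalCalculus ℝ R IsSelfAdjoint]
  [NonnegSpectrumClass ℝ R]

section SeparatelyContinuousMul

variable [SeparatelyContinuousMul R] {a b : R}

lemma conjSqrt_nonneg (hb : 0 ≤ b) : 0 ≤ conjSqrt a b := by
  simpa only [map_zero] using conjSqrt_le_conjSqrt (c := a) hb

/-- The geometric mean `a # b = a^{1/2} (a^{-1/2} b a^{-1/2})^{1/2} a^{1/2}` of a strictly positive
`a` and a nonnegative `b`. The inverse is `Ring.inverse`, which is `0` if `a` is not a unit, and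
`conjSqrt c x` is `sqrt c * x * sqrt c`. -/
noncomputable def geomMean (a b : R) : R :=
  conjSqrt a (sqrt (conjSqrt a⁻¹ʳ b))

lemma geomMean_nonneg : 0 ≤ geomMean a b :=
  conjSqrt_nonneg (sqrt_nonneg _)

end SeparatelyContinuousMul

variable [IsSemitopologicalRing R] [T2Space R] {a b x y : R}

lemma conjSqrt_mul_conjSqrt (ha : 0 ≤ a) :
    conjSqrt a x * conjSqrt a y = conjSqrt a (x * a * y) := by
  nth_rw 4 [← sqrt_mul_sqrt_self a]
  simp only [conjSqrt_apply, mul_assoc]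

lemma geomMean_mul_ringInverse_mul_geomMean (ha : IsStrictlyPositive a) (hb : 0 ≤ b) :
    geomMean a b * a⁻¹ʳ * geomMean a b = b := by
  have hconj : conjSqrt a⁻¹ʳ (geomMean a b * a⁻¹ʳ * geomMean a b) = conjSqrt a⁻¹ʳ b := by
    rw [← conjSqrt_mul_conjSqrt ha.ringInverse.nonneg, geomMean,
      conjSqrt_ringInverse_conjSqrt a _, sqrt_mul_sqrt_self _ (conjSqrt_nonneg hb)]
  simpa only [conjSqrt_conjSqrt_ringInverse a _] using congrArg (conjSqrt a) hconj

end ConjSqrt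

lemma le_sqrt_of_mul_self_le {R : Type*} [NonUnitalCStarAlgebra R] [PartialOrder R]
    [StarOrderedRing R] {a x : R} (hx : IsSelfAdjoint x) (h : x * x ≤ a) : x ≤ sqrt a :=
  calc
    x ≤ CFC.abs x := by
      rw [← sub_nonneg, abs_sub_self x hx]
      exact smul_nonneg zero_le_two (negPart_nonneg x)
    _ = sqrt (x * x) := by rw [CFC.abs, hx.star_eq]
    _ ≤ sqrt a := sqrt_le_sqrt _ _ h

section CStarAlgebra

variable {R : Type*} [CStarAlgebra R] [PartialOrder R] [StarOrderedRing R] {a b c d x : R}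

lemma le_geomMean (ha : IsStrictlyPositive a) (hx : IsSelfAdjoint x) (h : x * a⁻¹ʳ * x ≤ b) :
    x ≤ geomMean a b := by
  have hsq : conjSqrt a⁻¹ʳ x * conjSqrt a⁻¹ʳ x ≤ conjSqrt a⁻¹ʳ b := by
    rw [conjSqrt_mul_conjSqrt ha.ringInverse.nonneg]
    exact conjSqrt_le_conjSqrt h
  have hsa : IsSelfAdjoint (conjSqrt a⁻¹ʳ x) := hx.conjugate_self (sqrt_nonneg _).isSelfAdjoint
  calc
    x = conjSqrt a (conjSqrt a⁻¹ʳ x) := (conjSqrt_conjSqrt_ringInverse a x).symm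
    _ ≤ geomMean a b := conjSqrt_le_conjSqrt (le_sqrt_of_mul_self_le hsa hsq)

theorem gmean_monotone_general (hc : IsStrictlyPositive c) (hd : 0 ≤ d) (hca : c ≤ a)
    (hdb : d ≤ b) : geomMean c d ≤ geomMean a b := by
  have hsa : IsSelfAdjoint (geomMean c d) := geomMean_nonneg.isSelfAdjoint
  refine le_geomMean (hc.of_le hca) hsa ?_
  calc
    geomMean c d * a⁻¹ʳ * geomMean c d ≤ geomMean c d * c⁻¹ʳ * geomMean c d :=
      hsa.conjugate_le_conjugate (CStarAlgebra.ringInverse_le_ringInverse hca)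
    _ = d := geomMean_mul_ringInverse_mul_geomMean hc hd
    _ ≤ b := hdb

end CStarAlgebra

section Matrix

open scoped MatrixOrder

variable {m : ℕ} {A B : Matrix (Fin m) (Fin m) ℂ}

lemma matFun_eq_cfc (hA : A.IsHermitian) (f : ℝ → ℝ) : matFun f A = cfc f A := by
  rw [matFun, dif_pos hA, hA.cfc_eq, IsHermitian.cfc, Unitary.conjStarAlgAut_apply]
  rfl

lemma msqrt_eq_sqrt (hA : A.PosSemidef) : msqrt A = sqrt A := by
  rw [msqrt, matFun_eq_cfc hA.isHermitian, sqrt_eq_real_sqrt A hA.nonneg, cfcₙ_eq_cfc]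

lemma gmean_eq_geomMean (hA : A.PosSemidef) (hB : B.PosSemidef) : gmean A B = geomMean A B := by
  have hconj : (sqrt A)⁻¹ * B * (sqrt A)⁻¹ = conjSqrt A⁻¹ʳ B := by
    rw [conjSqrt_apply, sqrt_ringInverse, nonsing_inv_eq_ringInverse]
  rw [gmean, msqrt_eq_sqrt hA, hconj, msqrt_eq_sqrt (conjSqrt_nonneg hB.nonneg).posSemidef,
    ← conjSqrt_apply, geomMean]

end Matrix

/-- Monotonicity of the geometric mean in the Loewner order. -/
theorem gmean_monotone {m : ℕ} (A B C D : Matrix (Fin m) (Fin m) ℂ)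
    (hA : A.PosDef) (hB : B.PosDef) (hC : C.PosDef) (hD : D.PosDef)
    (hCA : Loewner C A) (hDB : Loewner D B) :
    Loewner (gmean C D) (gmean A B) := by
  rw [gmean_eq_geomMean hC.posSemidef hD.posSemidef, gmean_eq_geomMean hA.posSemidef hB.posSemidef]
  open scoped MatrixOrder Matrix.Norms.L2Operator in
  exact gmean_monotone_general hC.isStrictlyPositive hD.posSemidef.nonneg hCA hDB
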